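/- Multidimensional thinning-trick limit theorem: Let X^(n) = (X_1^(n),...,X_s^(n)) be random vectors with N_0-valued components and p_r^(n) ∈ [0,1] deterministic with p_r^(n) → 0. Suppose (p_1^(n)⊙X_1^(n),...,p_s^(n)⊙X_s^(n)) converges in distribution to Z = (Z_1,...,Z_s), where Z has a multivariate mixed Poisson distribution with mixing vector Y = (Y_1,...,Y_s) (i.e. Z_r = N_r(Y_r) for independent unit-rate Poisson processes N_r independent of Y), and that sup_n p_r^(n) E[X_r^(n)] < ∞ for each r. Then (p_1^(n) X_1^(n),...,p_s^(n) X_s^(n)) converges in distribution to Y. -/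

import Mathlib

open MeasureTheory ProbabilityTheory Finset

lemma tt_tsum_prod : ∀ (s : ℕ) (f : Fin s → ℕ → ENNReal),
    ∑' k : Fin s → ℕ, ∏ r, f r (k r) = ∏ r, ∑' n, f r n := by
  intro s
  induction s with
  | zero => intro f; simp
  | succ s ih =>
    intro f
    rw [← (Fin.consEquiv (fun _ : Fin (s+1) => ℕ)).tsum_eq, ENNReal.tsum_prod']
    simp only [Fin.consEquiv_apply, Fin.prod_univ_succ, Fin.cons_zero, Fin.cons_succ]
    simp_rw [ENNReal.tsum_mul_left, ENNReal.tsum_mul_right, ih (fun r => f r.succ)]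

lemma tt_poisson_pgf (u y : ℝ) (hu : 0 ≤ u) (hy : 0 ≤ y) :
    ∑' n : ℕ, ENNReal.ofReal (u ^ n * (Real.exp (-y) * y ^ n / (Nat.factorial n : ℝ)))
      = ENNReal.ofReal (Real.exp (-((1 - u) * y))) := by
  have h : HasSum (fun n : ℕ => u ^ n * (Real.exp (-y) * y ^ n / (Nat.factorial n : ℝ)))
      (Real.exp (-((1 - u) * y))) := by
    have h1 := (NormedSpace.expSeries_div_hasSum_exp (u * y)).mul_left (Real.exp (-y))
    rw [← Real.exp_eq_exp_ℝ, ← Real.exp_add] at h1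
    have e1 : (fun n : ℕ => u ^ n * (Real.exp (-y) * y ^ n / (Nat.factorial n : ℝ)))
        = fun n : ℕ => Real.exp (-y) * ((u * y) ^ n / (Nat.factorial n : ℝ)) := by
      funext n; rw [mul_pow]; ring
    have e2 : -((1 - u) * y) = -y + u * y := by ring
    rw [e1, e2]
    exact h1
  rw [← h.tsum_eq, ENNReal.ofReal_tsum_of_nonneg _ h.summable]
  intro n; positivity

lemma tt_poisson_le (y : ℝ) (hy : 0 ≤ y) (n : ℕ) :
    Real.exp (-y) * y ^ n / (Nat.factorial n : ℝ) ≤ 1 := by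
  have := Real.pow_div_factorial_le_exp y hy n
  calc _ = Real.exp (-y) * (y ^ n / (Nat.factorial n : ℝ)) := by ring
    _ ≤ Real.exp (-y) * Real.exp y := by gcongr
    _ = 1 := by rw [← Real.exp_add]; simp

lemma tt_mixed_pgf (s : ℕ)
    {Ω : Type*} [MeasurableSpace Ω] (μ : Measure Ω) [IsProbabilityMeasure μ]
    (Y : Fin s → Ω → ℝ) (hYmeas : ∀ r, Measurable (Y r)) (hYnn : ∀ r ω, 0 ≤ Y r ω)
    (Z : Fin s → Ω → ℕ) (hZmeas : ∀ r, Measurable (Z r))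
    (hmix : ∀ k : Fin s → ℕ, μ {ω | ∀ r, Z r ω = k r}
      = ENNReal.ofReal (∫ ω, ∏ r,
          Real.exp (-(Y r ω)) * (Y r ω) ^ (k r) / (Nat.factorial (k r) : ℝ) ∂μ))
    (u : Fin s → ℝ) (hu : ∀ r, 0 ≤ u r) :
    ∫ ω, ∏ r, (u r) ^ (Z r ω) ∂μ = ∫ ω, Real.exp (-∑ r, (1 - u r) * Y r ω) ∂μ := by
  have hZm : Measurable (fun ω r => Z r ω) := measurable_pi_lambda _ hZmeas
  rw [integral_eq_lintegral_of_nonneg_ae, integral_eq_lintegral_of_nonneg_ae]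
  rotate_left
  · exact .of_forall fun ω => (Real.exp_pos _).le
  · exact (by fun_prop : Measurable _).aestronglyMeasurable
  · exact .of_forall fun ω => prod_nonneg fun r _ => pow_nonneg (hu r) _
  · exact (by fun_prop : Measurable _).aestronglyMeasurable
  congr 1
  have h1 : ∫⁻ ω, ENNReal.ofReal (∏ r, (u r) ^ (Z r ω)) ∂μ
      = ∫⁻ k : Fin s → ℕ, ENNReal.ofReal (∏ r, (u r) ^ (k r)) ∂(μ.map (fun ω r => Z r ω)) := by
    rw [lintegral_map (Measurable.of_discrete) hZm]
  rw [h1, lintegral_countable']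
  have h2 : ∀ k : Fin s → ℕ, ENNReal.ofReal (∏ r, (u r) ^ (k r)) * (μ.map (fun ω r => Z r ω)) {k}
      = ∫⁻ ω, ∏ r, ENNReal.ofReal (u r ^ (k r) * (Real.exp (-(Y r ω)) * (Y r ω) ^ (k r)
          / (Nat.factorial (k r) : ℝ))) ∂μ := by
    intro k
    have hnn : ∀ r ω, 0 ≤ Real.exp (-(Y r ω)) * (Y r ω) ^ (k r) / (Nat.factorial (k r) : ℝ) := by
      intro r ω
      have := hYnn r ω
      positivity
    have hm : Measurable (fun ω => ∏ r, 
          Real.exp (-(Y r ω)) * (Y r ω) ^ (k r) / (Nat.factorial (k r) : ℝ)) := by fun_prop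
    rw [Measure.map_apply hZm (measurableSet_singleton k)]
    have : (fun ω r => Z r ω) ⁻¹' {k} = {ω | ∀ r, Z r ω = k r} := by
      ext ω; simp [funext_iff]
    rw [this, hmix, ofReal_integral_eq_lintegral_ofReal, ← lintegral_const_mul]
    · refine lintegral_congr fun ω => ?_
      rw [← ENNReal.ofReal_mul (prod_nonneg fun r _ => pow_nonneg (hu r) _), ← prod_mul_distrib,
        ENNReal.ofReal_prod_of_nonneg]
      intro r _
      exact mul_nonneg (pow_nonneg (hu r) _) (hnn r ω)
    · exact hm.ennreal_ofReal
    · refine Integrable.of_bound hm.aestronglyMeasurable 1 (.of_forall fun ω => ?_)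
      rw [Real.norm_of_nonneg (prod_nonneg fun r _ => hnn r ω)]
      exact prod_le_one (fun r _ => hnn r ω) (fun r _ => tt_poisson_le _ (hYnn r ω) _)
    · exact .of_forall fun ω => prod_nonneg fun r _ => hnn r ω
  simp_rw [h2]
  rw [← lintegral_tsum]
  · refine lintegral_congr fun ω => ?_
    rw [tt_tsum_prod s (fun r n => ENNReal.ofReal (u r ^ n * (Real.exp (-(Y r ω)) * (Y r ω) ^ n
          / (Nat.factorial n : ℝ))))]
    simp_rw [fun r => tt_poisson_pgf (u r) (Y r ω) (hu r) (hYnn r ω)]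
    rw [← ENNReal.ofReal_prod_of_nonneg (fun _ _ => (Real.exp_pos _).le), ← Real.exp_sum]
    simp
  · intro k
    exact (by fun_prop : Measurable _).aemeasurable

lemma tt_prod_diff {ι : Type*} (S : Finset ι) (a b : ι → ℝ) (ha : ∀ r, a r ∈ Set.Icc (0:ℝ) 1)
    (hb : ∀ r, b r ∈ Set.Icc (0:ℝ) 1) :
    |∏ r ∈ S, a r - ∏ r ∈ S, b r| ≤ ∑ r ∈ S, |a r - b r| := by
  classical
  induction S using Finset.induction_on with
  | empty => simp
  | insert i S hi ih =>
    rw [prod_insert hi, prod_insert hi, sum_insert hi]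
    have h1 : 0 ≤ ∏ r ∈ S, a r := prod_nonneg fun r _ => (ha r).1
    have h2 : ∏ r ∈ S, a r ≤ 1 := prod_le_one (fun r _ => (ha r).1) fun r _ => (ha r).2
    calc _ = |(a i - b i) * ∏ r ∈ S, a r + b i * (∏ r ∈ S, a r - ∏ r ∈ S, b r)| := by
            congr 1; ring
      _ ≤ |a i - b i| * |∏ r ∈ S, a r| + |b i| * |∏ r ∈ S, a r - ∏ r ∈ S, b r| := by
            rw [← abs_mul, ← abs_mul]; exact abs_add_le _ _
      _ ≤ |a i - b i| * 1 + 1 * |∏ r ∈ S, a r - ∏ r ∈ S, b r| := by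
            gcongr
            · rwa [abs_of_nonneg h1]
            · rw [abs_of_nonneg (hb i).1]; exact (hb i).2
      _ ≤ _ := by linarith

lemma tt_pow_exp (a : ℝ) (ha : a ∈ Set.Icc (0:ℝ) 1) (k : ℕ) :
    |(1 - a) ^ k - Real.exp (-(a * k))| ≤ k * a ^ 2 := by
  obtain ⟨h0, h1⟩ := ha
  have e : Real.exp (-(a * k)) = Real.exp (-a) ^ k := by
    rw [← Real.exp_nat_mul]; congr 1; ring
  have hle : Real.exp (-a) ≤ 1 := by simpa using h0
  have hb : |(1 - a) - Real.exp (-a)| ≤ a ^ 2 := by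
    have := Real.abs_exp_sub_one_sub_id_le (x := -a) (by rw [abs_neg, abs_of_nonneg h0]; exact h1)
    rw [abs_sub_comm]
    convert this using 1
    · congr 1; ring
    · ring
  rw [e]
  refine (abs_pow_sub_pow_le _ _ _).trans ?_
  have hm : max |1 - a| |Real.exp (-a)| ^ (k - 1) ≤ 1 := by
    apply pow_le_one₀ (by positivity)
    rw [abs_of_nonneg (by linarith), abs_of_pos (Real.exp_pos _)]
    exact max_le (by linarith) hle
  calc _ ≤ a ^ 2 * k * 1 := by gcongr
    _ = _ := by ring

lemma tt_charFunDual_eq {E : Type*} [NormedAddCommGroup E] [NormedSpace ℝ E] [MeasurableSpace E]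
    [BorelSpace E] (ν₁ ν₂ : Measure E) (L : StrongDual ℝ E) (δ : ℝ) (hδ : 0 < δ)
    (h1 : ∀ t : ℝ, |t| < δ → Integrable (fun x => Real.exp (t * L x)) ν₁)
    (h2 : ∀ t : ℝ, |t| < δ → Integrable (fun x => Real.exp (t * L x)) ν₂)
    (h : ∀ t : ℝ, |t| < δ → ∫ x, Real.exp (t * L x) ∂ν₁ = ∫ x, Real.exp (t * L x) ∂ν₂) :
    charFunDual ν₁ L = charFunDual ν₂ L := by
  let U : Set ℂ := Complex.re ⁻¹' (Set.Ioo (-δ) δ)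
  have a1 : AnalyticOnNhd ℂ (complexMGF (fun x => L x) ν₁) U := by
    refine analyticOnNhd_complexMGF.mono fun z hz => ?_
    exact mem_interior.2 ⟨Set.Ioo (-δ) δ, fun t ht => h1 t (abs_lt.2 ht), isOpen_Ioo, hz⟩
  have a2 : AnalyticOnNhd ℂ (complexMGF (fun x => L x) ν₂) U := by
    refine analyticOnNhd_complexMGF.mono fun z hz => ?_
    exact mem_interior.2 ⟨Set.Ioo (-δ) δ, fun t ht => h2 t (abs_lt.2 ht), isOpen_Ioo, hz⟩
  have key := AnalyticOnNhd.eqOn_of_preconnected_of_frequently_eq a1 a2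
    ((convex_Ioo (-δ) δ).linear_preimage Complex.reLm).isPreconnected
    (U := U) (z₀ := (0 : ℂ)) (by simp [U, hδ]) ?_
  · have := key (x := Complex.I) (by simp [U, hδ])
    rw [charFunDual_apply, charFunDual_apply]
    simpa [complexMGF, mul_comm] using this
  · have h_real : ∃ᶠ (x : ℝ) in nhdsWithin 0 {0}ᶜ,
        complexMGF (fun x => L x) ν₁ x = complexMGF (fun x => L x) ν₂ x := by
      refine Filter.Eventually.frequently ?_
      refine nhdsWithin_le_nhds ?_
      filter_upwards [Ioo_mem_nhds (neg_lt_zero.2 hδ) hδ] with t ht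
      rw [complexMGF_ofReal, complexMGF_ofReal]
      simp only [mgf]
      rw [h t (abs_lt.2 ht)]
    rw [Filter.frequently_iff_seq_forall] at h_real ⊢
    obtain ⟨xs, hx_tendsto, hx_eq⟩ := h_real
    refine ⟨fun n ↦ xs n, ?_, fun n ↦ ?_⟩
    · rw [tendsto_nhdsWithin_iff] at hx_tendsto ⊢
      constructor
      · have := (Complex.continuous_ofReal.tendsto 0).comp hx_tendsto.1
        simpa [Function.comp_def] using this
      · simpa using hx_tendsto.2
    · simp [hx_eq]

lemma tt_unique (s : ℕ) (ν₁ ν₂ : Measure (Fin s → ℝ)) [IsProbabilityMeasure ν₁]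
    [IsProbabilityMeasure ν₂] (h1 : ∀ᵐ x ∂ν₁, ∀ r, 0 ≤ x r) (h2 : ∀ᵐ x ∂ν₂, ∀ r, 0 ≤ x r)
    (h : ∀ t : Fin s → ℝ, (∀ r, t r ∈ Set.Ioo (0:ℝ) 1) →
      ∫ x, Real.exp (-∑ r, t r * x r) ∂ν₁ = ∫ x, Real.exp (-∑ r, t r * x r) ∂ν₂) :
    ν₁ = ν₂ := by
  let f : (Fin s → ℝ) → ENNReal := fun x => ENNReal.ofReal (Real.exp (-∑ r, (1/2) * x r))
  have hf : Measurable f := by fun_prop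
  have hf0 : ∀ x, f x ≠ 0 := fun x => by simp [f, Real.exp_pos]
  have hft : ∀ x, f x ≠ ⊤ := fun x => by simp [f]
  have int : ∀ (ν : Measure (Fin s → ℝ)) [IsProbabilityMeasure ν] (_ : ∀ᵐ x ∂ν, ∀ r, 0 ≤ x r)
      (t : Fin s → ℝ) (_ : ∀ r, t r ∈ Set.Ioo (0:ℝ) 1),
      Integrable (fun x => Real.exp (-∑ r, t r * x r)) ν := by
    intro ν _ hν t ht
    refine Integrable.of_bound (Continuous.aestronglyMeasurable (by fun_prop)) 1 ?_
    filter_upwards [hν] with x hx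
    rw [Real.norm_of_nonneg (Real.exp_pos _).le, Real.exp_le_one_iff, neg_nonpos]
    exact sum_nonneg fun r _ => mul_nonneg (ht r).1.le (hx r)
  have fin : ∀ (ν : Measure (Fin s → ℝ)) [IsProbabilityMeasure ν] (_ : ∀ᵐ x ∂ν, ∀ r, 0 ≤ x r),
      IsFiniteMeasure (ν.withDensity f) := by
    intro ν _ hν
    exact isFiniteMeasure_withDensity_ofReal
      (int ν hν (fun _ => 1/2) (fun r => ⟨by norm_num, by norm_num⟩)).2
  have := fin ν₁ h1
  have := fin ν₂ h2
  have key : ν₁.withDensity f = ν₂.withDensity f := by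
    refine Measure.ext_of_charFunDual (funext fun L => ?_)
    obtain ⟨δ, hδ, hδL⟩ : ∃ δ : ℝ, 0 < δ ∧ ∀ t : ℝ, |t| < δ → ∀ r,
        1/2 - t * L (Pi.single r 1) ∈ Set.Ioo (0:ℝ) 1 := by
      have : ∀ᶠ t : ℝ in nhds 0, ∀ r, 1/2 - t * L (Pi.single r 1) ∈ Set.Ioo (0:ℝ) 1 := by
        rw [Filter.eventually_all]
        intro r
        have hc : Continuous fun t : ℝ => 1/2 - t * L (Pi.single r 1) := by fun_prop
        exact hc.continuousAt.eventually_mem (Ioo_mem_nhds (by norm_num) (by norm_num))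
      obtain ⟨δ, hδ, hh⟩ := Metric.eventually_nhds_iff.1 this
      exact ⟨δ, hδ, fun t ht => hh (by simpa using ht)⟩
    have eL : ∀ (t : ℝ) (x : Fin s → ℝ), (f x).toReal • Real.exp (t * L x)
        = Real.exp (-∑ r, (1/2 - t * L (Pi.single r 1)) * x r) := by
      intro t x
      have : L x = ∑ r, x r * L (Pi.single r 1) := by
        conv_lhs => rw [pi_eq_sum_univ' x, map_sum]
        refine sum_congr rfl fun r _ => ?_
        rw [map_smul, smul_eq_mul]
      simp only [f]
      rw [ENNReal.toReal_ofReal (Real.exp_pos _).le, smul_eq_mul, ← Real.exp_add, this]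
      congr 1
      rw [mul_sum, ← sum_neg_distrib, ← sum_neg_distrib, ← sum_add_distrib]
      exact sum_congr rfl fun r _ => by ring
    refine tt_charFunDual_eq _ _ L δ hδ ?_ ?_ ?_
    · intro t ht
      rw [integrable_withDensity_iff_integrable_smul' hf (.of_forall fun x => (hft x).lt_top)]
      simp_rw [eL t]
      exact int ν₁ h1 _ (hδL t ht)
    · intro t ht
      rw [integrable_withDensity_iff_integrable_smul' hf (.of_forall fun x => (hft x).lt_top)]
      simp_rw [eL t]
      exact int ν₂ h2 _ (hδL t ht)
    · intro t ht
      rw [integral_withDensity_eq_integral_toReal_smul hf (.of_forall fun x => (hft x).lt_top),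
        integral_withDensity_eq_integral_toReal_smul hf (.of_forall fun x => (hft x).lt_top)]
      simp_rw [eL t]
      exact h _ (hδL t ht)
  rw [← withDensity_inv_same (μ := ν₁) hf (.of_forall hf0) (.of_forall hft), key,
    withDensity_inv_same (μ := ν₂) hf (.of_forall hf0) (.of_forall hft)]

lemma tt_unique' (s : ℕ) (ν₁ ν₂ : Measure (Fin s → NNReal)) [IsProbabilityMeasure ν₁]
    [IsProbabilityMeasure ν₂]
    (h : ∀ t : Fin s → ℝ, (∀ r, t r ∈ Set.Ioo (0:ℝ) 1) →
      ∫ x, Real.exp (-∑ r, t r * (x r : ℝ)) ∂ν₁ = ∫ x, Real.exp (-∑ r, t r * (x r : ℝ)) ∂ν₂) :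
    ν₁ = ν₂ := by
  let c : (Fin s → NNReal) → (Fin s → ℝ) := fun x r => x r
  let d : (Fin s → ℝ) → (Fin s → NNReal) := fun x r => (x r).toNNReal
  have hc : Measurable c := by fun_prop
  have hd : Measurable d := by fun_prop
  have hdc : d ∘ c = id := by ext x r; simp [c, d]
  have := Measure.isProbabilityMeasure_map (μ := ν₁) hc.aemeasurable
  have := Measure.isProbabilityMeasure_map (μ := ν₂) hc.aemeasurable
  have key : ν₁.map c = ν₂.map c := by
    have hms : MeasurableSet {x : Fin s → ℝ | ∀ r, 0 ≤ x r} := by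
      measurability
    refine tt_unique s _ _ ?_ ?_ ?_
    · rw [ae_map_iff hc.aemeasurable hms]
      exact .of_forall fun x r => (x r).2
    · rw [ae_map_iff hc.aemeasurable hms]
      exact .of_forall fun x r => (x r).2
    · intro t ht
      rw [integral_map hc.aemeasurable (Continuous.aestronglyMeasurable (by fun_prop)), integral_map hc.aemeasurable (Continuous.aestronglyMeasurable (by fun_prop))]
      exact h t ht
  rw [← Measure.map_id (μ := ν₁), ← hdc, ← Measure.map_map hd hc, key, Measure.map_map hd hc, hdc,
    Measure.map_id]

lemma tt_laplace
    (s : ℕ)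
    {Ω : Type*} [MeasurableSpace Ω] (μ : Measure Ω) [IsProbabilityMeasure μ]
    (X : ℕ → Fin s → Ω → ℕ) (hXmeas : ∀ n r, Measurable (X n r))
    (p : ℕ → Fin s → ℝ) (hp01 : ∀ n r, p n r ∈ Set.Icc (0 : ℝ) 1)
    (hp0 : ∀ r, Filter.Tendsto (fun n => p n r) Filter.atTop (nhds 0))
    (T : ℕ → Fin s → Ω → ℕ)
    (hTthin : ∀ n, ∀ u : Fin s → ℝ, (∀ r, u r ∈ Set.Icc (0 : ℝ) 1) →
      ∫ ω, ∏ r, (u r) ^ (T n r ω) ∂μ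
        = ∫ ω, ∏ r, (p n r * u r + (1 - p n r)) ^ (X n r ω) ∂μ)
    (Y : Fin s → Ω → ℝ) (hYmeas : ∀ r, Measurable (Y r)) (hYnn : ∀ r ω, 0 ≤ Y r ω)
    (Z : Fin s → Ω → ℕ) (hZmeas : ∀ r, Measurable (Z r))
    (hmix : ∀ k : Fin s → ℕ, μ {ω | ∀ r, Z r ω = k r}
      = ENNReal.ofReal (∫ ω, ∏ r,
          Real.exp (-(Y r ω)) * (Y r ω) ^ (k r) / (Nat.factorial (k r) : ℝ) ∂μ))
    (hconv : ∀ g : BoundedContinuousFunction (Fin s → ℝ) ℝ,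
      Filter.Tendsto (fun n => ∫ ω, g (fun r => (T n r ω : ℝ)) ∂μ)
        Filter.atTop (nhds (∫ ω, g (fun r => (Z r ω : ℝ)) ∂μ)))
    (hint : ∀ n r, Integrable (fun ω => (X n r ω : ℝ)) μ)
    (hmom : ∀ r, ∃ C : ℝ, ∀ n, p n r * ∫ ω, (X n r ω : ℝ) ∂μ ≤ C)
    (t : Fin s → ℝ) (ht : ∀ r, t r ∈ Set.Ioo (0:ℝ) 1) :
    Filter.Tendsto (fun n => ∫ ω, Real.exp (-∑ r, t r * (p n r * (X n r ω : ℝ))) ∂μ)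
        Filter.atTop (nhds (∫ ω, Real.exp (-∑ r, t r * Y r ω) ∂μ)) := by
  choose C hC using hmom
  have hlog : ∀ r, Real.log (1 - t r) ≤ 0 := fun r =>
    Real.log_nonpos (by linarith [(ht r).2]) (by linarith [(ht r).1])
  let g : BoundedContinuousFunction (Fin s → ℝ) ℝ :=
    BoundedContinuousFunction.ofNormedAddCommGroup
      (fun x => Real.exp (∑ r, Real.log (1 - t r) * max (x r) 0)) (by fun_prop) 1 (by
        intro x
        rw [Real.norm_of_nonneg (Real.exp_pos _).le, Real.exp_le_one_iff]
        exact sum_nonpos fun r _ => mul_nonpos_of_nonpos_of_nonneg (hlog r) (le_max_right _ _))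
  have hg : ∀ k : Fin s → ℕ, g (fun r => (k r : ℝ)) = ∏ r, (1 - t r) ^ (k r) := by
    intro k
    change Real.exp (∑ r, Real.log (1 - t r) * max (k r : ℝ) 0) = _
    rw [Real.exp_sum]
    refine prod_congr rfl fun r _ => ?_
    rw [max_eq_left (Nat.cast_nonneg _), mul_comm, Real.exp_nat_mul,
      Real.exp_log (by linarith [(ht r).2])]
  have h1 := hconv g
  simp only [hg] at h1
  simp_rw [fun n => hTthin n (fun r => 1 - t r) (fun r => ⟨by linarith [(ht r).2], by linarith [(ht r).1]⟩)] at h1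
  rw [tt_mixed_pgf s μ Y hYmeas hYnn Z hZmeas hmix (fun r => 1 - t r) (fun r => by linarith [(ht r).2])] at h1
  simp only [sub_sub_cancel] at h1
  refine h1.congr_dist ?_
  have hpt : ∀ n r, p n r * t r ∈ Set.Icc (0:ℝ) 1 := fun n r =>
    ⟨mul_nonneg (hp01 n r).1 (ht r).1.le,
      mul_le_one₀ (hp01 n r).2 (ht r).1.le (ht r).2.le⟩
  have hlim : Filter.Tendsto (fun n => ∑ r, p n r * C r) Filter.atTop (nhds 0) := by
    have : Filter.Tendsto (fun n => ∑ r, p n r * C r) Filter.atTop (nhds (∑ r, 0 * C r)) :=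
      tendsto_finsetSum _ fun r _ => (hp0 r).mul_const _
    simpa using this
  refine squeeze_zero (fun _ => dist_nonneg) (fun n => ?_) hlim
  have ha : ∀ r ω, (1 - p n r * t r) ^ (X n r ω) ∈ Set.Icc (0:ℝ) 1 := fun r ω =>
    ⟨pow_nonneg (by linarith [(hpt n r).2]) _,
      pow_le_one₀ (by linarith [(hpt n r).2]) (by linarith [(hpt n r).1])⟩
  have hb : ∀ r ω, Real.exp (-(p n r * t r * (X n r ω : ℝ))) ∈ Set.Icc (0:ℝ) 1 := fun r ω =>
    ⟨(Real.exp_pos _).le, by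
      rw [Real.exp_le_one_iff, neg_nonpos]
      exact mul_nonneg (hpt n r).1 (Nat.cast_nonneg _)⟩
  have ea : ∀ ω, ∏ r, (p n r * (1 - t r) + (1 - p n r)) ^ (X n r ω)
      = ∏ r, (1 - p n r * t r) ^ (X n r ω) := fun ω =>
    prod_congr rfl fun r _ => by congr 1; ring
  have eb : ∀ ω, Real.exp (-∑ r, t r * (p n r * (X n r ω : ℝ)))
      = ∏ r, Real.exp (-(p n r * t r * (X n r ω : ℝ))) := fun ω => by
    rw [← Real.exp_sum, sum_neg_distrib]
    congr 2
    exact sum_congr rfl fun r _ => by ring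
  simp_rw [ea, eb]
  have ia : Integrable (fun ω => ∏ r, (1 - p n r * t r) ^ (X n r ω)) μ := by
    refine Integrable.of_bound (by fun_prop : Measurable _).aestronglyMeasurable 1
      (.of_forall fun ω => ?_)
    rw [Real.norm_of_nonneg (prod_nonneg fun r _ => (ha r ω).1)]
    exact prod_le_one (fun r _ => (ha r ω).1) fun r _ => (ha r ω).2
  have ib : Integrable (fun ω => ∏ r, Real.exp (-(p n r * t r * (X n r ω : ℝ)))) μ := by
    refine Integrable.of_bound (by fun_prop : Measurable _).aestronglyMeasurable 1
      (.of_forall fun ω => ?_)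
    rw [Real.norm_of_nonneg (prod_nonneg fun r _ => (hb r ω).1)]
    exact prod_le_one (fun r _ => (hb r ω).1) fun r _ => (hb r ω).2
  rw [Real.dist_eq, ← integral_sub ia ib]
  refine abs_integral_le_integral_abs.trans ?_
  calc _ ≤ ∫ ω, ∑ r, p n r ^ 2 * (X n r ω : ℝ) ∂μ := by
        refine integral_mono (ia.sub ib).abs
          (integrable_finsetSum _ fun r _ => (hint n r).const_mul _) fun ω => ?_
        refine (tt_prod_diff univ _ _ (fun r => ha r ω) (fun r => hb r ω)).trans ?_
        refine sum_le_sum fun r _ => (tt_pow_exp _ (hpt n r) _).trans ?_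
        rw [mul_comm]
        gcongr
        · exact (hpt n r).1
        · exact mul_le_of_le_one_right (hp01 n r).1 (ht r).2.le
    _ = ∑ r, p n r * (p n r * ∫ ω, (X n r ω : ℝ) ∂μ) := by
        rw [integral_finsetSum _ fun r _ => (hint n r).const_mul _]
        refine sum_congr rfl fun r _ => ?_
        rw [integral_const_mul]; ring
    _ ≤ _ := sum_le_sum fun r _ => mul_le_mul_of_nonneg_left (hC r n) (hp01 n r).1

lemma tt_tight
    (s : ℕ)
    {Ω : Type*} [MeasurableSpace Ω] (μ : Measure Ω) [IsProbabilityMeasure μ]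
    (X : ℕ → Fin s → Ω → ℕ) (hXmeas : ∀ n r, Measurable (X n r))
    (p : ℕ → Fin s → ℝ) (hp01 : ∀ n r, p n r ∈ Set.Icc (0 : ℝ) 1)
    (hint : ∀ n r, Integrable (fun ω => (X n r ω : ℝ)) μ)
    (hmom : ∀ r, ∃ C : ℝ, ∀ n, p n r * ∫ ω, (X n r ω : ℝ) ∂μ ≤ C) :
    IsTightMeasureSet (Set.range fun n =>
      μ.map (fun ω r => (p n r * (X n r ω : ℝ)).toNNReal)) := by
  choose C hC using hmom
  have hnn : ∀ n r ω, 0 ≤ p n r * (X n r ω : ℝ) := fun n r ω =>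
    mul_nonneg (hp01 n r).1 (Nat.cast_nonneg _)
  rw [isTightMeasureSet_iff_exists_isCompact_measure_compl_le]
  intro ε hε
  obtain ⟨δ, hδ, hδε⟩ : ∃ δ : ℝ, 0 < δ ∧ ENNReal.ofReal δ ≤ ε := by
    obtain ⟨δ, h0, h1⟩ := ENNReal.lt_iff_exists_nnreal_btwn.1 hε
    exact ⟨δ, by simpa using h0, by simpa using h1.le⟩
  obtain ⟨R, hR0, hR⟩ : ∃ R : ℝ, 0 < R ∧ ∑ r, C r ≤ R * δ := by
    refine ⟨max 1 ((∑ r, C r) / δ), by positivity, ?_⟩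
    rw [← div_le_iff₀ hδ]
    exact le_max_right _ _
  refine ⟨Set.Icc 0 (fun _ => R.toNNReal), isCompact_Icc, ?_⟩
  rintro _ ⟨n, rfl⟩
  refine le_trans ?_ hδε
  have hm : Measurable (fun ω r => (p n r * (X n r ω : ℝ)).toNNReal) := by fun_prop
  rw [Measure.map_apply hm measurableSet_Icc.compl]
  have hi : Integrable (fun ω => ∑ r, p n r * (X n r ω : ℝ)) μ :=
    integrable_finsetSum _ fun r _ => (hint n r).const_mul _
  have hmk := mul_meas_ge_le_integral_of_nonneg
    (.of_forall fun ω => sum_nonneg fun r _ => hnn n r ω) hi R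
  have hle : ∫ ω, ∑ r, p n r * (X n r ω : ℝ) ∂μ ≤ R * δ := by
    rw [integral_finsetSum _ fun r _ => (hint n r).const_mul _]
    simp_rw [integral_const_mul]
    exact (sum_le_sum fun r _ => hC r n).trans hR
  have h3 : μ.real {ω | R ≤ ∑ r, p n r * (X n r ω : ℝ)} ≤ δ :=
    le_of_mul_le_mul_left (hmk.trans hle) hR0
  refine le_trans (measure_mono (t := {ω | R ≤ ∑ r, p n r * (X n r ω : ℝ)}) ?_) ?_
  · intro ω hω
    simp only [Set.mem_preimage, Set.mem_compl_iff, Set.mem_Icc, not_and] at hω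
    have := hω (fun r => zero_le)
    simp only [Pi.le_def, not_forall, not_le] at this
    obtain ⟨r, hr⟩ := this
    have hr' : R < p n r * (X n r ω : ℝ) := (Real.toNNReal_lt_toNNReal_iff'.1 hr).1
    exact hr'.le.trans (single_le_sum (f := fun r => p n r * (X n r ω : ℝ))
      (fun r _ => hnn n r ω) (mem_univ r))
  · rw [← ENNReal.ofReal_toReal (measure_ne_top μ _)]
    exact ENNReal.ofReal_le_ofReal h3

/-- The multidimensional thinning-trick limit theorem: if the Bernoulli-thinned
vectors `(p_r^(n) ⊙ X_r^(n))_{r≤s}` (realized as `T n`, characterized by their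
joint pgf) converge in distribution to a multivariate mixed Poisson vector `Z`
with mixing vector `Y`, `p_r^(n) → 0`, and `sup_n p_r^(n) E[X_r^(n)] < ∞`, then
`(p_r^(n) X_r^(n))_{r≤s}` converges in distribution to `Y`. -/
theorem thinning_trick
    (s : ℕ)
    {Ω : Type*} [MeasurableSpace Ω] (μ : Measure Ω) [IsProbabilityMeasure μ]
    (X : ℕ → Fin s → Ω → ℕ) (hXmeas : ∀ n r, Measurable (X n r))
    (p : ℕ → Fin s → ℝ) (hp01 : ∀ n r, p n r ∈ Set.Icc (0 : ℝ) 1)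
    (hp0 : ∀ r, Filter.Tendsto (fun n => p n r) Filter.atTop (nhds 0))
    -- `T n` realizes the thinned vector `(p_1^(n) ⊙ X_1^(n), …, p_s^(n) ⊙ X_s^(n))`,
    -- characterized in distribution by its joint probability generating function:
    (T : ℕ → Fin s → Ω → ℕ) (hTmeas : ∀ n r, Measurable (T n r))
    (hTthin : ∀ n, ∀ u : Fin s → ℝ, (∀ r, u r ∈ Set.Icc (0 : ℝ) 1) →
      ∫ ω, ∏ r, (u r) ^ (T n r ω) ∂μ
        = ∫ ω, ∏ r, (p n r * u r + (1 - p n r)) ^ (X n r ω) ∂μ)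
    -- `Z` is multivariate mixed Poisson with mixing vector `Y`:
    (Y : Fin s → Ω → ℝ) (hYmeas : ∀ r, Measurable (Y r)) (hYnn : ∀ r ω, 0 ≤ Y r ω)
    (Z : Fin s → Ω → ℕ) (hZmeas : ∀ r, Measurable (Z r))
    (hmix : ∀ k : Fin s → ℕ, μ {ω | ∀ r, Z r ω = k r}
      = ENNReal.ofReal (∫ ω, ∏ r,
          Real.exp (-(Y r ω)) * (Y r ω) ^ (k r) / (Nat.factorial (k r) : ℝ) ∂μ))
    -- convergence in distribution of the thinned vectors to `Z`:
    (hconv : ∀ g : BoundedContinuousFunction (Fin s → ℝ) ℝ,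
      Filter.Tendsto (fun n => ∫ ω, g (fun r => (T n r ω : ℝ)) ∂μ)
        Filter.atTop (nhds (∫ ω, g (fun r => (Z r ω : ℝ)) ∂μ)))
    -- uniform first-moment condition `sup_n p_r^(n) E[X_r^(n)] < ∞`:
    (hint : ∀ n r, Integrable (fun ω => (X n r ω : ℝ)) μ)
    (hmom : ∀ r, ∃ C : ℝ, ∀ n, p n r * ∫ ω, (X n r ω : ℝ) ∂μ ≤ C) :
    -- conclusion: convergence in distribution of the normalized vectors to `Y`
    ∀ g : BoundedContinuousFunction (Fin s → ℝ) ℝ,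
      Filter.Tendsto (fun n => ∫ ω, g (fun r => p n r * (X n r ω : ℝ)) ∂μ)
        Filter.atTop (nhds (∫ ω, g (fun r => Y r ω) ∂μ)) := by
  have hnn : ∀ n r ω, 0 ≤ p n r * (X n r ω : ℝ) := fun n r ω =>
    mul_nonneg (hp01 n r).1 (Nat.cast_nonneg _)
  have hW : ∀ n, Measurable (fun ω r => (p n r * (X n r ω : ℝ)).toNNReal) := fun n => by fun_prop
  have hV : Measurable (fun ω r => (Y r ω).toNNReal) := by fun_prop
  let ν : ℕ → ProbabilityMeasure (Fin s → NNReal) := fun n =>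
    ⟨μ.map (fun ω r => (p n r * (X n r ω : ℝ)).toNNReal),
      Measure.isProbabilityMeasure_map (hW n).aemeasurable⟩
  let ν₀ : ProbabilityMeasure (Fin s → NNReal) :=
    ⟨μ.map (fun ω r => (Y r ω).toNNReal), Measure.isProbabilityMeasure_map hV.aemeasurable⟩
  have iν : ∀ n (f : (Fin s → NNReal) → ℝ), Continuous f → ∫ x, f x ∂(ν n : Measure _)
      = ∫ ω, f (fun r => (p n r * (X n r ω : ℝ)).toNNReal) ∂μ := fun n f hf =>
    integral_map (hW n).aemeasurable hf.aestronglyMeasurable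
  have iν₀ : ∀ (f : (Fin s → NNReal) → ℝ), Continuous f → ∫ x, f x ∂(ν₀ : Measure _)
      = ∫ ω, f (fun r => (Y r ω).toNNReal) ∂μ := fun f hf =>
    integral_map hV.aemeasurable hf.aestronglyMeasurable
  have htight := tt_tight s μ X hXmeas p hp01 hint hmom
  have main : Filter.Tendsto ν Filter.atTop (nhds ν₀) := by
    refine (Filter.tendsto_iff_ultrafilter _ _ _).2 fun U hU => ?_
    have h_compact : IsCompact (closure (Set.range ν)) := by
      refine isCompact_closure_of_isTightMeasureSet (htight.subset ?_)
      rintro _ ⟨_, ⟨n, rfl⟩, rfl⟩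
      exact ⟨n, rfl⟩
    obtain ⟨ν', -, hν'⟩ := h_compact.ultrafilter_le_nhds (U.map ν)
      (by
        rw [Filter.le_principal_iff]
        refine Filter.mem_map.2 (Filter.univ_mem' fun n => ?_)
        exact subset_closure (Set.mem_range_self n))
    have hν'' : Filter.Tendsto ν U (nhds ν') := hν'
    suffices h : ν' = ν₀ by rw [← h]; exact hν''
    refine Subtype.ext ?_
    change (ν' : Measure (Fin s → NNReal)) = (ν₀ : Measure (Fin s → NNReal))
    refine tt_unique' s _ _ fun t ht => ?_
    have hcont : Continuous (fun x : Fin s → NNReal => Real.exp (-∑ r, t r * (x r : ℝ))) := by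
      fun_prop
    let g : BoundedContinuousFunction (Fin s → NNReal) ℝ :=
      BoundedContinuousFunction.ofNormedAddCommGroup
        (fun x => Real.exp (-∑ r, t r * (x r : ℝ))) hcont 1 (by
          intro x
          rw [Real.norm_of_nonneg (Real.exp_pos _).le, Real.exp_le_one_iff, neg_nonpos]
          exact sum_nonneg fun r _ => mul_nonneg (ht r).1.le (x r).2)
    have l1 := (ProbabilityMeasure.tendsto_iff_forall_integral_tendsto.1 hν'') g
    have l2 := (tt_laplace s μ X hXmeas p hp01 hp0 T hTthin Y hYmeas hYnn Z hZmeas hmix hconv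
      hint hmom t ht).mono_left hU
    refine tendsto_nhds_unique l1 ?_
    rw [iν₀ _ hcont]
    simp_rw [fun n => iν n g hcont]
    change Filter.Tendsto (fun n => ∫ ω, Real.exp
      (-∑ r, t r * (((p n r * (X n r ω : ℝ)).toNNReal : NNReal) : ℝ)) ∂μ) U _
    simp_rw [Real.coe_toNNReal _ (hnn _ _ _), Real.coe_toNNReal _ (hYnn _ _)]
    exact l2
  intro g
  have hc : Continuous (fun (x : Fin s → NNReal) (r : Fin s) => (x r : ℝ)) := by fun_prop
  have l := (ProbabilityMeasure.tendsto_iff_forall_integral_tendsto.1 main)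
    (g.compContinuous ⟨_, hc⟩)
  have hgc : Continuous (g.compContinuous ⟨_, hc⟩) := (g.compContinuous ⟨_, hc⟩).continuous
  rw [iν₀ _ hgc] at l
  simp_rw [fun n => iν n _ hgc] at l
  simp only [BoundedContinuousFunction.compContinuous_apply, ContinuousMap.coe_mk,
    Real.coe_toNNReal _ (hnn _ _ _), Real.coe_toNNReal _ (hYnn _ _)] at l
  exact l
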